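/- Let λ, p, q, r, P, Q, S be real numbers with p > 0, p·q − r² = 1 and p·Q + q·P = 2·r·S. Define G := [[p, r], [r, q]] and A := [[P + 2λp, S], [S, Q − 2λq]]. Then trace(A·G⁻¹·A·G⁻¹) ≥ 8·λ² + 8·λ·(P/p), and equality holds if and only if P = 0 and S = 2·r·λ. -/

import Mathlib

/-!
The constraint `p * Q + q * P = 2 * r * S` says that `A * G⁻¹` is traceless: the `Q` and `P` terms
cancel against `S`, and the two terms in `l` cancel each other. A traceless `2 × 2` matrix `B`
satisfies `tr (B * B) = -2 * det B`, so the energy is `-2 * det A / det G`. Tracelessness also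
makes `-det A` definite: with `v = A₀₀ / p` it equals `det G * v ^ 2 + (S - r * v) ^ 2`.
Here `v = P / p + 2 * l`, and expanding `2 * v ^ 2` produces `8 * l ^ 2 + 8 * l * (P / p)` and
a square.
-/

section CommRing

open Matrix

variable {R : Type*} [CommRing R]

theorem trace_mul_self_fin_two (B : Matrix (Fin 2) (Fin 2) R) :
    (B * B).trace = B.trace ^ 2 - 2 * B.det := by
  simp only [trace_fin_two, det_fin_two, mul_apply, Fin.sum_univ_two]
  ring

theorem trace_mul_adjugate_fin_two (A G : Matrix (Fin 2) (Fin 2) R) :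
    (A * G.adjugate).trace =
      A 0 0 * G 1 1 + A 1 1 * G 0 0 - A 0 1 * G 1 0 - A 1 0 * G 0 1 := by
  simp only [adjugate_fin_two, trace_fin_two, mul_apply, Fin.sum_univ_two, of_apply, cons_val',
    cons_val_zero, cons_val_one, cons_val_fin_one]
  ring

end CommRing

section Field

open Matrix

variable {K : Type*} [Field K]

theorem trace_mul_inv_fin_two (A G : Matrix (Fin 2) (Fin 2) K) :
    (A * G⁻¹).trace =
      (A 0 0 * G 1 1 + A 1 1 * G 0 0 - A 0 1 * G 1 0 - A 1 0 * G 0 1) / G.det := by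
  rw [inv_def, Ring.inverse_eq_inv', Matrix.mul_smul, trace_smul, trace_mul_adjugate_fin_two,
    smul_eq_mul, inv_mul_eq_div]

theorem trace_mul_inv_mul_self_of_trace_eq_zero {A G : Matrix (Fin 2) (Fin 2) K}
    (h : (A * G⁻¹).trace = 0) : (A * G⁻¹ * A * G⁻¹).trace = -2 * A.det / G.det := by
  rw [Matrix.mul_assoc (A * G⁻¹), trace_mul_self_fin_two, h, det_mul, det_nonsing_inv,
    Ring.inverse_eq_inv']
  ring

/-- `h` is orthogonality of `!![a, s; s, d]` and `!![p, r; r, q]` for the polar form of `det`. -/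
theorem sq_sub_mul_eq_of_orthogonal {p q r a d s : K} (hp : p ≠ 0)
    (h : a * q + d * p = 2 * r * s) :
    s ^ 2 - a * d = (p * q - r ^ 2) * (a / p) ^ 2 + (s - r * (a / p)) ^ 2 := by
  field_simp
  linear_combination -a * p * h

theorem trace_mul_inv_mul_self_of_symm {p q r a d s : K} (hp : p ≠ 0) (hG : p * q - r ^ 2 ≠ 0)
    (h : a * q + d * p = 2 * r * s) :
    (!![a, s; s, d] * !![p, r; r, q]⁻¹ * !![a, s; s, d] * !![p, r; r, q]⁻¹).trace =
      2 * ((a / p) ^ 2 + (s - r * (a / p)) ^ 2 / (p * q - r ^ 2)) := by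
  have hdet : (!![p, r; r, q]).det = p * q - r ^ 2 := by rw [det_fin_two_of, sq]
  have htrace : (!![a, s; s, d] * !![p, r; r, q]⁻¹).trace = 0 := by
    rw [trace_mul_inv_fin_two]
    simp only [of_apply, cons_val', cons_val_zero, cons_val_one, cons_val_fin_one]
    rw [show a * q + d * p - s * r - s * r = 0 by linear_combination h, zero_div]
  calc _ = 2 * (s ^ 2 - a * d) / (p * q - r ^ 2) := by
        rw [trace_mul_inv_mul_self_of_trace_eq_zero htrace, hdet, det_fin_two_of]
        ring
    _ = _ := by
        rw [sq_sub_mul_eq_of_orthogonal hp h]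
        field_simp

theorem energy_density_eq {l p q r P Q S : K} (hp : p ≠ 0) (h1 : p * q - r ^ 2 = 1)
    (h2 : p * Q + q * P = 2 * r * S) :
    (!![P + 2 * l * p, S; S, Q - 2 * l * q] * !![p, r; r, q]⁻¹ *
        !![P + 2 * l * p, S; S, Q - 2 * l * q] * !![p, r; r, q]⁻¹).trace =
      8 * l ^ 2 + 8 * l * (P / p) +
        2 * ((P / p) ^ 2 + (S - r * (P / p + 2 * l)) ^ 2) := by
  have horth : (P + 2 * l * p) * q + (Q - 2 * l * q) * p = 2 * r * S := by
    linear_combination h2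
  have hv : (P + 2 * l * p) / p = P / p + 2 * l := by field_simp
  rw [trace_mul_inv_mul_self_of_symm hp (h1 ▸ one_ne_zero) horth, h1, hv]
  ring

end Field

theorem energy_density_inequality_general {K : Type*} [Field K] [LinearOrder K]
    [IsStrictOrderedRing K] {l p q r P Q S : K}
    (h1 : p * q - r ^ 2 = 1) (h2 : p * Q + q * P = 2 * r * S)
    {G A : Matrix (Fin 2) (Fin 2) K}
    (hG : G = !![p, r; r, q])
    (hA : A = !![P + 2 * l * p, S; S, Q - 2 * l * q]) :
    8 * l ^ 2 + 8 * l * (P / p) ≤ (A * G⁻¹ * A * G⁻¹).trace ∧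
    ((A * G⁻¹ * A * G⁻¹).trace = 8 * l ^ 2 + 8 * l * (P / p) ↔
      P = 0 ∧ S = 2 * r * l) := by
  have hp : p ≠ 0 := by
    rintro rfl
    linarith [sq_nonneg r]
  rw [hG, hA, energy_density_eq hp h1 h2]
  refine ⟨le_add_of_nonneg_right (by positivity), ?_⟩
  calc _ ↔ (P / p) ^ 2 + (S - r * (P / p + 2 * l)) ^ 2 = 0 := by
        rw [add_eq_left, mul_eq_zero_iff_left two_ne_zero]
    _ ↔ P / p = 0 ∧ S - r * (P / p + 2 * l) = 0 := by
        rw [sq, sq, mul_self_add_mul_self_eq_zero]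
    _ ↔ P = 0 ∧ S = 2 * r * l := by
        rw [div_eq_zero_iff, or_iff_left hp]
        refine and_congr_right fun hP ↦ ?_
        rw [hP, zero_div, zero_add, sub_eq_zero, mul_left_comm, mul_assoc]

/-- Pointwise energy inequality: for `p > 0`, `p*q - r² = 1`, `p*Q + q*P = 2*r*S`,
with `G = [[p,r],[r,q]]` and `A = [[P+2λp, S],[S, Q-2λq]]`, one has
`tr(A G⁻¹ A G⁻¹) ≥ 8λ² + 8λ(P/p)`, with equality iff `P = 0` and `S = 2rλ`. -/
theorem energy_density_inequality (l p q r P Q S : ℝ) (hp : 0 < p)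
    (h1 : p * q - r ^ 2 = 1) (h2 : p * Q + q * P = 2 * r * S)
    (G A : Matrix (Fin 2) (Fin 2) ℝ)
    (hG : G = !![p, r; r, q])
    (hA : A = !![P + 2 * l * p, S; S, Q - 2 * l * q]) :
    8 * l ^ 2 + 8 * l * (P / p) ≤ (A * G⁻¹ * A * G⁻¹).trace ∧
    ((A * G⁻¹ * A * G⁻¹).trace = 8 * l ^ 2 + 8 * l * (P / p) ↔
      P = 0 ∧ S = 2 * r * l) :=
  energy_density_inequality_general h1 h2 hG hA
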